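/- Let w ∈ W^J. For v, v' ∈ W_{I(J,w,δ)}, the elements w v and w v' lie in the same orbit of the δ-twisted partial conjugation action of W_J on W if and only if v' = (w⁻¹ δ(u) w) v u⁻¹ for some u ∈ W_{I(J,w,δ)} (i.e. v and v' are Ad(w)⁻¹∘δ-twisted conjugate in W_{I(J,w,δ)}); moreover every W_J-orbit contained in W_J ·_δ (w W_{I(J,w,δ)}) contains w v for some v ∈ W_{I(J,w,δ)}. Hence v ↦ W_J ·_δ {w v} induces a bijection from the set of Ad(w)⁻¹∘δ-twisted conjugacy classes of W_{I(J,w,δ)} onto the set of W_J-orbits contained in W_J ·_δ (w W_{I(J,w,δ)}). -/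

import Mathlib

open CoxeterSystem

variable {B : Type*} [Finite B] {W : Type*} [Group W] {M : CoxeterMatrix B}

namespace PartialConjugation

/-- The standard parabolic subgroup `W_J` of `W`, generated by the simple
reflections indexed by `J`. -/
def parab (cs : CoxeterSystem M W) (J : Set B) : Subgroup W :=
  Subgroup.closure (cs.simple '' J)

/-- The simple reflection `s_j` (for `j ∈ J`), viewed as an element of `W_J`. -/
def sJ (cs : CoxeterSystem M W) (J : Set B) (j : B) (hj : j ∈ J) : parab cs J :=
  ⟨cs.simple j, Subgroup.subset_closure ⟨j, hj, rfl⟩⟩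

/-- `w ∈ W^J`: `w` is a minimal length representative of its left coset `w W_J`. -/
def IsMinRep (cs : CoxeterSystem M W) (J : Set B) (w : W) : Prop :=
  ∀ v ∈ parab cs J, cs.length w ≤ cs.length (w * v)

variable (cs : CoxeterSystem M W) (J J' : Set B) (δ : parab cs J ≃* parab cs J')

/-- `δ` carries the set of simple reflections indexed by `J` onto the set of
simple reflections indexed by `J'`. -/
def MapsSimples : Prop :=
  (∀ j, ∀ hj : j ∈ J, ∃ j' ∈ J', (δ (sJ cs J j hj) : W) = cs.simple j') ∧
  (∀ j' ∈ J', ∃ j, ∃ hj : j ∈ J, (δ (sJ cs J j hj) : W) = cs.simple j')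

/-- `K` is a `w`-special subset of `J`. -/
def WSpecial (w : W) (K : Set B) : Prop :=
  K ⊆ J ∧ ∀ k ∈ K, ∃ j, ∃ hjJ : j ∈ J, j ∈ K ∧
    w * cs.simple k * w⁻¹ = (δ (sJ cs J j hjJ) : W)

/-- The set `I(J, w, δ)`: the union of all `w`-special subsets of `J`. -/
def Iset (w : W) : Set B := ⋃₀ {K | WSpecial cs J J' δ w K}

/-- The set `W_J ·_δ V = {δ(u) v u⁻¹ : u ∈ W_J, v ∈ V}`. -/
def orbSet (V : Set W) : Set W :=
  {x | ∃ u : parab cs J, ∃ v ∈ V, x = (δ u : W) * v * (u : W)⁻¹}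

/-- The orbit of `x` under the `δ`-twisted partial conjugation action of `W_J`. -/
def orbitOf (x : W) : Set W := orbSet cs J J' δ {x}

/-- The coset `w W_{I(J,w,δ)}`. -/
def coset (w : W) : Set W :=
  {x | ∃ v ∈ parab cs (Iset cs J J' δ w), x = w * v}

/-- Elementary step `v →_i v'` of `δ`-twisted conjugation: `v' = δ(s_i) v s_i`
with `i ∈ J` and `ℓ(v') ≤ ℓ(v)`. -/
def StepRel (v v' : W) : Prop :=
  ∃ i, ∃ hi : i ∈ J, v' = (δ (sJ cs J i hi) : W) * v * cs.simple i ∧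
    cs.length v' ≤ cs.length v

/-- The relation `v →_{J,δ} v'`. -/
def ToRel : W → W → Prop := Relation.ReflTransGen (StepRel cs J J' δ)

/-- The relation `v ≈_{J,δ} v'`. -/
def Approx (v v' : W) : Prop := ToRel cs J J' δ v v' ∧ ToRel cs J J' δ v' v

/-- The Bruhat order on `W`. -/
def bruhatLE (cs : CoxeterSystem M W) : W → W → Prop :=
  Relation.ReflTransGen
    (fun a b => ∃ t, cs.IsReflection t ∧ b = a * t ∧ cs.length a < cs.length b)

/-- The set of minimal length elements in the orbit of `x`. -/
def orbMin (x : W) : Set W :=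
  {y ∈ orbitOf cs J J' δ x | ∀ z ∈ orbitOf cs J J' δ x, cs.length y ≤ cs.length z}


/-- `v` and `v'` are `Ad(w)⁻¹ ∘ δ`-twisted conjugate in `W_{I(J,w,δ)}`:
`v' = (w⁻¹ δ(u) w) v u⁻¹` for some `u ∈ W_{I(J,w,δ)}`. -/
def TwConj (w v v' : W) : Prop :=
  ∃ u : W, ∃ huI : u ∈ parab cs (Iset cs J J' δ w), ∃ huJ : u ∈ parab cs J,
    v' = (w⁻¹ * (δ ⟨u, huJ⟩ : W) * w) * v * u⁻¹

/-!
Put `I = I(J, w, δ)`. The whole content is that `w v' = δ(u) (w v) u⁻¹` with `v, v' ∈ W_I` and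
`u ∈ W_J` forces `u ∈ W_I`. Choose `K ⊆ J` minimal with `I ⊆ K` and `u ∈ W_K`, and write `w = x w₀`
with `x ∈ W_{δ(K)}` and `w₀` of minimal length in `W_{δ(K)} w W_K`. The equation says that `w₀`
conjugates `v' u v⁻¹ ∈ W_K` to `x⁻¹ δ(u) x ∈ W_{δ(K)}`, so by Kilmoyer's description of
`W_K ∩ w₀⁻¹ W_{δ(K)} w₀` this element lies in the parabolic subgroup of `K ∩ w₀⁻¹ δ(K) w₀`, which
contains `I`; hence `u` lies there too. By minimality that set is `K`, so conjugation by `w₀` embeds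
the simple reflections of `W_K` into those of `W_{δ(K)}`, and by counting it is onto. Therefore
`w W_K = w₀ W_K`, so `w = w₀`, `K` is `w`-special and `K = I`.

The facts on parabolic subgroups come from the cocycle identity `N(xy) = N(y) + y⁻¹ N(x) y`
(symmetric difference) for the set `N(w)` of right inversions of `w`.
-/

section General

variable {ι W : Type*} [Group W] {M : CoxeterMatrix ι} (cs : CoxeterSystem M W)

/-! ### Inversions and the strong exchange property -/

theorem prod_map_reverse_alternatingWord {G : Type*} [Monoid G] (f : ι → G) (i j : ι) (k : ℕ) :
    ((alternatingWord j i (2 * k)).reverse.map f).prod = (f i * f j) ^ k := by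
  induction k with
  | zero => simp [alternatingWord]
  | succ k ih =>
    rw [Nat.mul_succ, alternatingWord_succ, alternatingWord_succ, pow_succ', ← ih]
    simp [mul_assoc]

theorem leftInvSeq_alternatingWord (i j : ι) (k : ℕ) :
    cs.leftInvSeq (alternatingWord i j (2 * k)) =
      (List.range (2 * k)).map fun n ↦ cs.simple i * (cs.simple j * cs.simple i) ^ n := by
  refine List.ext_getElem (by simp) fun n hn _ ↦ ?_
  rw [cs.getElem_leftInvSeq_alternatingWord i j k n (by simpa using hn),
    cs.prod_alternatingWord_eq_mul_pow]
  simp [show (2 * n + 1) / 2 = n by lia]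

theorem even_count_leftInvSeq_alternatingWord [DecidableEq W] (i j : ι) (t : W) :
    Even ((cs.leftInvSeq (alternatingWord i j (2 * M j i))).count t) := by
  -- The two halves of the sequence coincide because `(s_j s_i) ^ M j i = 1`.
  rw [leftInvSeq_alternatingWord, two_mul, List.range_add, List.map_append, List.map_map,
    List.count_append]
  simp [Function.comp_def, pow_add]

open scoped Classical in
/-- The action of a simple reflection on signed group elements `W × ℤ/2`: conjugation by `s_i`,
flipping the sign exactly at `s_i` itself. On the pairs whose first entry is a reflection this is
the action of `s_i` on the roots. -/
noncomputable def signedReflection (i : ι) : Equiv.Perm (W × ZMod 2) :=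
  Function.Involutive.toPerm
    (fun p ↦ (cs.simple i * p.1 * cs.simple i, p.2 + if p.1 = cs.simple i then 1 else 0)) <| by
    rintro ⟨t, e⟩
    have conj_eq_iff : cs.simple i * t * cs.simple i = cs.simple i ↔ t = cs.simple i := by
      rw [mul_eq_right, mul_eq_one_iff_eq_inv', cs.inv_simple]
    simp only [conj_eq_iff, add_assoc, CharTwo.add_self_eq_zero, add_zero]
    simp [mul_assoc]

open scoped Classical in
theorem signedReflection_apply (i : ι) (t : W) (e : ZMod 2) :
    signedReflection cs i (t, e) =
      (cs.simple i * t * (cs.simple i)⁻¹, e + if t = cs.simple i then 1 else 0) := by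
  rw [cs.inv_simple]
  rfl

open scoped Classical in
theorem prod_map_signedReflection_apply (ω : List ι) (t : W) (e : ZMod 2) :
    (ω.map (signedReflection cs)).prod (t, e) =
      (cs.wordProd ω * t * (cs.wordProd ω)⁻¹, e + (cs.rightInvSeq ω).count t) := by
  induction ω with
  | nil => simp
  | cons i ω ih =>
    have eq_simple_iff : cs.wordProd ω * t * (cs.wordProd ω)⁻¹ = cs.simple i ↔
        (cs.wordProd ω)⁻¹ * cs.simple i * cs.wordProd ω = t := by
      rw [mul_inv_eq_iff_eq_mul, ← eq_inv_mul_iff_mul_eq, eq_comm, mul_assoc]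
    simp only [List.map_cons, List.prod_cons, Equiv.Perm.mul_apply, ih, signedReflection_apply,
      eq_simple_iff, rightInvSeq, List.count_cons, beq_iff_eq, cs.wordProd_cons, mul_inv_rev,
      add_assoc, Nat.cast_add, Nat.cast_ite, Nat.cast_one, Nat.cast_zero]
    simp only [mul_assoc]

theorem isLiftable_signedReflection : M.IsLiftable (signedReflection cs) := by
  classical
  intro i j
  rw [← prod_map_reverse_alternatingWord]
  ext1 ⟨t, e⟩
  have wordProd_eq_one : cs.wordProd (alternatingWord j i (2 * M i j)).reverse = 1 := by
    rw [wordProd, prod_map_reverse_alternatingWord, cs.simple_mul_simple_pow]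
  have even_count := even_count_leftInvSeq_alternatingWord cs j i t
  rw [prod_map_signedReflection_apply, wordProd_eq_one, cs.rightInvSeq_reverse,
    List.count_reverse, even_count.natCast_zmod_two]
  simp

/-- The action of `W` on signed group elements `W × ℤ/2` extending `signedReflection`; the sign
counts inversions modulo 2. -/
noncomputable def signedConj : W →* Equiv.Perm (W × ZMod 2) :=
  cs.lift ⟨signedReflection cs, isLiftable_signedReflection cs⟩

/-- The parity of the number of occurrences of `t` in the right inversion sequence of any word
for `w`, whether reduced or not. -/
noncomputable def inversionParity (w t : W) : ZMod 2 :=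
  (signedConj cs w (t, 0)).2

open scoped Classical in
theorem signedConj_wordProd_apply (ω : List ι) (t : W) (e : ZMod 2) :
    signedConj cs (cs.wordProd ω) (t, e) =
      (cs.wordProd ω * t * (cs.wordProd ω)⁻¹, e + (cs.rightInvSeq ω).count t) := by
  rw [← prod_map_signedReflection_apply, wordProd, map_list_prod, List.map_map]
  congr 4
  ext1 i
  exact cs.lift_apply_simple (isLiftable_signedReflection cs) i

open scoped Classical in
theorem inversionParity_wordProd (ω : List ι) (t : W) :
    inversionParity cs (cs.wordProd ω) t = (cs.rightInvSeq ω).count t := by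
  rw [inversionParity, signedConj_wordProd_apply, zero_add]

theorem signedConj_apply (w t : W) (e : ZMod 2) :
    signedConj cs w (t, e) = (w * t * w⁻¹, e + inversionParity cs w t) := by
  classical
  obtain ⟨ω, rfl⟩ := cs.wordProd_surjective w
  rw [signedConj_wordProd_apply, inversionParity_wordProd]

theorem inversionParity_mul (x y t : W) :
    inversionParity cs (x * y) t =
      inversionParity cs y t + inversionParity cs x (y * t * y⁻¹) := by
  rw [inversionParity, map_mul, Equiv.Perm.mul_apply, signedConj_apply, signedConj_apply, zero_add]

theorem inversionParity_self {t : W} (ht : cs.IsReflection t) : inversionParity cs t t = 1 := by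
  classical
  obtain ⟨g, i, rfl⟩ := ht
  have parity_simple : inversionParity cs (cs.simple i) (cs.simple i) = 1 := by
    simpa using inversionParity_wordProd cs [i] (cs.simple i)
  have parity_cancel : inversionParity cs g⁻¹ (g * cs.simple i * g⁻¹) +
      inversionParity cs g (cs.simple i) = 0 := by
    simpa [mul_assoc, inversionParity] using
      (inversionParity_mul cs g g⁻¹ (g * cs.simple i * g⁻¹)).symm
  rw [mul_assoc, inversionParity_mul, inversionParity_mul]
  simp only [mul_assoc, mul_inv_rev, inv_inv, inv_mul_cancel_left, inv_mul_cancel, mul_one,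
    cs.inv_simple, cs.simple_mul_simple_cancel_left] at parity_cancel ⊢
  rw [parity_simple, add_right_comm, parity_cancel, zero_add]

theorem isRightInversion_of_inversionParity_eq_one {w t : W} (h : inversionParity cs w t = 1) :
    cs.IsRightInversion w t := by
  classical
  obtain ⟨ω, hω, rfl⟩ := cs.exists_isReduced w
  refine cs.isRightInversion_of_mem_rightInvSeq hω (by_contra fun hmem ↦ ?_)
  simp [inversionParity_wordProd, List.count_eq_zero_of_not_mem hmem] at h

theorem isRightInversion_iff_inversionParity {w t : W} (ht : cs.IsReflection t) :
    cs.IsRightInversion w t ↔ inversionParity cs w t = 1 := by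
  refine ⟨fun h ↦ ?_, isRightInversion_of_inversionParity_eq_one cs⟩
  have parity_mul_self : inversionParity cs (w * t) t = 1 + inversionParity cs w t := by
    rw [inversionParity_mul, inversionParity_self cs ht, mul_inv_cancel_right]
  by_contra hne
  refine ht.isRightInversion_mul_left_iff.1
    (isRightInversion_of_inversionParity_eq_one cs ?_) h
  have parity_eq_zero : ∀ a : ZMod 2, a ≠ 1 → a = 0 := by decide
  rw [parity_mul_self, parity_eq_zero _ hne, add_zero]

theorem isRightInversion_mul_iff {x y t : W} (ht : cs.IsReflection t) :
    cs.IsRightInversion (x * y) t ↔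
      Xor (cs.IsRightInversion y t) (cs.IsRightInversion x (y * t * y⁻¹)) := by
  rw [isRightInversion_iff_inversionParity cs ht, isRightInversion_iff_inversionParity cs ht,
    isRightInversion_iff_inversionParity cs (ht.conj y), inversionParity_mul]
  generalize inversionParity cs y t = a
  generalize inversionParity cs x (y * t * y⁻¹) = b
  decide +revert

theorem exists_wordProd_eraseIdx_of_isRightInversion {ω : List ι} {t : W}
    (h : cs.IsRightInversion (cs.wordProd ω) t) :
    ∃ k < ω.length, cs.wordProd ω * t = cs.wordProd (ω.eraseIdx k) := by
  classical
  rw [isRightInversion_iff_inversionParity cs h.1, inversionParity_wordProd] at h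
  have hmem : t ∈ cs.rightInvSeq ω := by
    by_contra hmem
    simp [List.count_eq_zero_of_not_mem hmem] at h
  obtain ⟨k, hk, rfl⟩ := List.mem_iff_getElem.1 hmem
  refine ⟨k, by simpa using hk, ?_⟩
  rw [← cs.wordProd_mul_getD_rightInvSeq, List.getD_eq_getElem]

/-! ### Parabolic subgroups and minimal coset representatives -/

variable {K L : Set ι}

theorem simple_mem_parab {i : ι} (hi : i ∈ K) : cs.simple i ∈ parab cs K :=
  Subgroup.subset_closure (Set.mem_image_of_mem _ hi)

theorem parab_mono (h : K ⊆ L) : parab cs K ≤ parab cs L :=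
  Subgroup.closure_mono (Set.image_mono h)

theorem wordProd_mem_parab {ω : List ι} (hω : ∀ i ∈ ω, i ∈ K) : cs.wordProd ω ∈ parab cs K :=
  list_prod_mem (by simpa using fun i hi ↦ simple_mem_parab cs (hω i hi))

theorem exists_isReduced_mul_simple {ω : List ι} (hω : cs.IsReduced ω) (hωK : ∀ i ∈ ω, i ∈ K)
    {k : ι} (hk : k ∈ K) :
    ∃ ω', cs.IsReduced ω' ∧ (∀ i ∈ ω', i ∈ K) ∧
      cs.wordProd ω * cs.simple k = cs.wordProd ω' := by
  by_cases hdesc : cs.IsRightDescent (cs.wordProd ω) k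
  · obtain ⟨n, hn, heq⟩ := exists_wordProd_eraseIdx_of_isRightInversion cs
      ((cs.isRightInversion_simple_iff_isRightDescent _ _).2 hdesc)
    refine ⟨ω.eraseIdx n, ?_, fun i hi ↦ hωK i (List.mem_of_mem_eraseIdx hi), heq⟩
    have hlen := cs.isRightDescent_iff.1 hdesc
    rw [CoxeterSystem.IsReduced, ← heq, List.length_eraseIdx_of_lt hn, ← hω.eq]
    lia
  · have heq : cs.wordProd ω * cs.simple k = cs.wordProd (ω ++ [k]) := by
      rw [cs.wordProd_append, cs.wordProd_singleton]
    refine ⟨ω ++ [k], ?_, by simpa [or_imp, forall_and] using ⟨hωK, hk⟩, heq⟩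
    rw [CoxeterSystem.IsReduced, ← heq, cs.not_isRightDescent_iff.1 hdesc, hω.eq,
      List.length_append, List.length_singleton]

theorem exists_isReduced_of_mem_parab {v : W} (hv : v ∈ parab cs K) :
    ∃ ω, cs.IsReduced ω ∧ (∀ i ∈ ω, i ∈ K) ∧ v = cs.wordProd ω := by
  induction hv using Subgroup.closure_induction_right with
  | one => exact ⟨[], by simp [CoxeterSystem.IsReduced], by simp, by simp⟩
  | mul_right v _ _ hs ih =>
    obtain ⟨k, hk, rfl⟩ := hs
    obtain ⟨ω, hω, hωK, rfl⟩ := ih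
    exact exists_isReduced_mul_simple cs hω hωK hk
  | mul_inv_cancel v _ _ hs ih =>
    obtain ⟨k, hk, rfl⟩ := hs
    obtain ⟨ω, hω, hωK, rfl⟩ := ih
    rw [cs.inv_simple]
    exact exists_isReduced_mul_simple cs hω hωK hk

@[elab_as_elim]
theorem parab_induction {p : (v : W) → v ∈ parab cs K → Prop} (one : p 1 (one_mem _))
    (mul_simple : ∀ (v : W) (hv : v ∈ parab cs K) (k : ι) (hk : k ∈ K),
      ¬cs.IsRightDescent v k → p v hv →
        p (v * cs.simple k) (mul_mem hv (simple_mem_parab cs hk)))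
    {v : W} (hv : v ∈ parab cs K) : p v hv := by
  obtain ⟨ω, hω, hωK, rfl⟩ := exists_isReduced_of_mem_parab cs hv
  induction ω using List.reverseRecOn with
  | nil => simpa using one
  | append_singleton ω k ih =>
    have hω' : cs.IsReduced ω := by simpa using hω.take ω.length
    obtain ⟨hωK', hk⟩ : (∀ i ∈ ω, i ∈ K) ∧ k ∈ K := by
      simpa [or_imp, forall_and] using hωK
    rw [CoxeterSystem.IsReduced, List.length_append, List.length_singleton, ← hω'.eq,
      cs.wordProd_append, cs.wordProd_singleton] at hω
    have hv := wordProd_mem_parab cs hωK'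
    simpa only [cs.wordProd_append, cs.wordProd_singleton] using
      mul_simple _ hv k hk (cs.not_isRightDescent_iff.2 hω) (ih hω' hωK' hv)

theorem mem_parab_of_isRightInversion {v t : W} (hv : v ∈ parab cs K)
    (ht : cs.IsRightInversion v t) : t ∈ parab cs K := by
  obtain ⟨ω, -, hωK, rfl⟩ := exists_isReduced_of_mem_parab cs hv
  obtain ⟨n, -, heq⟩ := exists_wordProd_eraseIdx_of_isRightInversion cs ht
  rw [eq_inv_mul_of_mul_eq heq]
  exact mul_mem (inv_mem hv)
    (wordProd_mem_parab cs fun i hi ↦ hωK i (List.mem_of_mem_eraseIdx hi))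

theorem exists_isMinRep_mul (K : Set ι) (g : W) : ∃ v ∈ parab cs K, IsMinRep cs K (g * v) := by
  obtain ⟨v, hv⟩ := exists_minimalFor_of_wellFoundedLT (· ∈ parab cs K)
    (fun v ↦ cs.length (g * v)) ⟨1, one_mem _⟩
  refine ⟨v, hv.1, fun u hu ↦ ?_⟩
  rw [mul_assoc]
  exact not_lt.1 (hv.not_lt (mul_mem hv.1 hu))

namespace IsMinRep

variable {cs} {w : W}

theorem mono (hw : IsMinRep cs L w) (h : K ⊆ L) : IsMinRep cs K w :=
  fun v hv ↦ hw v (parab_mono cs h hv)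

theorem not_isRightInversion (hw : IsMinRep cs K w) {t : W} (ht : t ∈ parab cs K) :
    ¬cs.IsRightInversion w t :=
  fun h ↦ (hw t ht).not_gt h.2

theorem isRightDescent_mul_iff (hw : IsMinRep cs K w) {v : W} (hv : v ∈ parab cs K) {k : ι}
    (hk : k ∈ K) : cs.IsRightDescent (w * v) k ↔ cs.IsRightDescent v k := by
  have conj_mem : v * cs.simple k * v⁻¹ ∈ parab cs K :=
    mul_mem (mul_mem hv (simple_mem_parab cs hk)) (inv_mem hv)
  simp only [← isRightInversion_simple_iff_isRightDescent,
    isRightInversion_mul_iff cs (cs.isReflection_simple k), hw.not_isRightInversion conj_mem,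
    xor_comm _ False, xor_false, id]

theorem length_mul (hw : IsMinRep cs K w) {v : W} (hv : v ∈ parab cs K) :
    cs.length (w * v) = cs.length w + cs.length v := by
  induction hv using parab_induction with
  | one => simp
  | mul_simple v hv k hk hvk ih =>
    have hwvk := (hw.isRightDescent_mul_iff hv hk).not.2 hvk
    rw [← mul_assoc, cs.not_isRightDescent_iff.1 hwvk, cs.not_isRightDescent_iff.1 hvk, ih,
      add_assoc]

theorem length_mul_of_inv (hw : IsMinRep cs K w⁻¹) {v : W} (hv : v ∈ parab cs K) :
    cs.length (v * w) = cs.length v + cs.length w := by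
  simpa only [← mul_inv_rev, cs.length_inv, add_comm] using hw.length_mul (inv_mem hv)

theorem eq_of_inv_mul_mem {w' : W} (hw : IsMinRep cs K w) (hw' : IsMinRep cs K w')
    (h : w⁻¹ * w' ∈ parab cs K) : w = w' := by
  have length_w' := hw.length_mul h
  have length_le := hw' _ (inv_mem h)
  rw [mul_inv_cancel_left] at length_w'
  rw [mul_inv_rev, inv_inv, mul_inv_cancel_left] at length_le
  exact inv_mul_eq_one.1 (cs.length_eq_zero_iff.1 (by lia))

theorem exists_eq_mul (hw : IsMinRep cs K w) (L : Set ι) :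
    ∃ x ∈ parab cs L, ∃ w₀, w = x * w₀ ∧ IsMinRep cs L w₀⁻¹ ∧ IsMinRep cs K w₀ := by
  obtain ⟨x, hx, hmin⟩ := exists_isMinRep_mul cs L w⁻¹
  obtain ⟨w₀, rfl⟩ : ∃ w₀, w = x * w₀ := ⟨x⁻¹ * w, by simp⟩
  replace hmin : IsMinRep cs L w₀⁻¹ := by simpa using hmin
  refine ⟨x, hx, w₀, rfl, hmin, fun v hv ↦ ?_⟩
  have length_le := hw v hv
  have length_mul_le := cs.length_mul_le x (w₀ * v)
  rw [hmin.length_mul_of_inv hx, mul_assoc] at length_le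
  lia

theorem exists_conj_simple_eq_simple (hw : IsMinRep cs L w⁻¹) {i : ι}
    (h : w * cs.simple i * w⁻¹ ∈ parab cs L) : ∃ l ∈ L, w * cs.simple i * w⁻¹ = cs.simple l := by
  obtain ⟨ω, hω, hωL, heq⟩ := exists_isReduced_of_mem_parab cs h
  have length_one : ω.length = 1 := by
    have length_mul := hw.length_mul_of_inv h
    rw [inv_mul_cancel_right, heq, hω.eq] at length_mul
    have := cs.length_mul_simple w i
    have := cs.length_mul_simple_ne w i
    lia
  obtain ⟨l, rfl⟩ := List.length_eq_one_iff.1 length_one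
  exact ⟨l, by simpa using hωL, by simpa using heq⟩

end IsMinRep

/-- The index set `K ∩ w⁻¹Lw` of the simple reflections of `W_K` that conjugation by `w` sends to
simple reflections of `W_L`. -/
def conjInter (w : W) (K L : Set ι) : Set ι :=
  {k | k ∈ K ∧ ∃ l ∈ L, w * cs.simple k * w⁻¹ = cs.simple l}

variable {cs} in
/-- Kilmoyer's theorem: the last letter `k` of a reduced word for `y` is a descent of
`w * y = (w * y * w⁻¹) * w` but not of `w`, so `w * s_k * w⁻¹` is an inversion of
`w * y * w⁻¹ ∈ W_L` and hence lies in `W_L`. -/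
theorem IsMinRep.mem_parab_conjInter {w y : W} (hwK : IsMinRep cs K w) (hwL : IsMinRep cs L w⁻¹)
    (hy : y ∈ parab cs K) (hconj : w * y * w⁻¹ ∈ parab cs L) :
    y ∈ parab cs (conjInter cs w K L) := by
  induction hy using parab_induction with
  | one => exact one_mem _
  | mul_simple v hv k hk hvk ih =>
    set z := w * (v * cs.simple k) * w⁻¹ with hz
    have isRightInversion_z : cs.IsRightInversion z (w * cs.simple k * w⁻¹) := by
      have hzw : cs.IsRightInversion (z * w) (cs.simple k) := by
        rw [isRightInversion_simple_iff_isRightDescent, hz, inv_mul_cancel_right,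
          hwK.isRightDescent_mul_iff (mul_mem hv (simple_mem_parab cs hk)) hk,
          cs.isRightDescent_iff_not_isRightDescent_mul]
        simpa using hvk
      rw [isRightInversion_mul_iff cs (cs.isReflection_simple k)] at hzw
      simpa [hwK.not_isRightInversion (simple_mem_parab cs hk)] using hzw
    have conj_mem := mem_parab_of_isRightInversion cs hconj isRightInversion_z
    have hk' : k ∈ conjInter cs w K L := ⟨hk, hwL.exists_conj_simple_eq_simple conj_mem⟩
    refine mul_mem (ih ?_) (simple_mem_parab cs hk')
    have : w * v * w⁻¹ = z * (w * cs.simple k * w⁻¹) := by simp [hz, mul_assoc]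
    rw [this]
    exact mul_mem hconj conj_mem

/-! ### Twisted partial conjugation -/

variable {J J' : Set ι} (δ : parab cs J ≃* parab cs J')

/-- The index set of the simple reflections `δ(s_k)` with `k ∈ K ∩ J`, written `δ(K)` when `δ` is
identified with a map between index sets. -/
def simpleImage (K : Set ι) : Set ι :=
  {l | ∃ k ∈ K, ∃ hk : k ∈ J, (δ (sJ cs J k hk) : W) = cs.simple l}

variable {cs δ}

theorem MapsSimples.map_mem_parab_simpleImage (hδ : MapsSimples cs J J' δ) (hKJ : K ⊆ J)
    {u : parab cs J} (hu : (u : W) ∈ parab cs K) :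
    (δ u : W) ∈ parab cs (simpleImage cs δ K) := by
  suffices ∀ u (hu : u ∈ parab cs K),
      (δ ⟨u, parab_mono cs hKJ hu⟩ : W) ∈ parab cs (simpleImage cs δ K) from this u hu
  intro u hu
  induction hu using parab_induction with
  | one => exact (congrArg Subtype.val (map_one δ)).symm ▸ one_mem _
  | mul_simple v hv k hk _ ih =>
    obtain ⟨l, -, hl⟩ := hδ.1 k (hKJ hk)
    have map_mul_simple := congrArg Subtype.val
      (map_mul δ ⟨v, parab_mono cs hKJ hv⟩ (sJ cs J k (hKJ hk)))
    refine map_mul_simple.symm ▸ mul_mem ih ?_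
    rw [hl]
    exact simple_mem_parab cs ⟨k, hk, hKJ hk, hl⟩

theorem simple_image_simpleImage_subset :
    cs.simple '' simpleImage cs δ K ⊆
      (fun u ↦ (δ u : W)) '' (Subtype.val ⁻¹' (cs.simple '' K)) := by
  rintro _ ⟨l, ⟨k, hk, hkJ, hl⟩, rfl⟩
  exact ⟨sJ cs J k hkJ, ⟨k, hk, rfl⟩, hl⟩

theorem finite_preimage_simple_image (hK : K.Finite) :
    ((↑) ⁻¹' (cs.simple '' K) : Set (parab cs J)).Finite :=
  (hK.image _).preimage Subtype.val_injective.injOn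

theorem finite_simple_image_simpleImage (hK : K.Finite) :
    (cs.simple '' simpleImage cs δ K).Finite :=
  ((finite_preimage_simple_image hK).image _).subset simple_image_simpleImage_subset

theorem ncard_simple_image_simpleImage_le (hK : K.Finite) :
    (cs.simple '' simpleImage cs δ K).ncard ≤ (cs.simple '' K).ncard := by
  have hfin := finite_preimage_simple_image (cs := cs) (J := J) hK
  calc (cs.simple '' simpleImage cs δ K).ncard
    _ ≤ ((fun u ↦ (δ u : W)) '' (Subtype.val ⁻¹' (cs.simple '' K))).ncard :=
      Set.ncard_le_ncard simple_image_simpleImage_subset (hfin.image _)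
    _ ≤ (Subtype.val ⁻¹' (cs.simple '' K) : Set (parab cs J)).ncard := Set.ncard_image_le hfin
    _ = (Subtype.val '' (Subtype.val ⁻¹' (cs.simple '' K) : Set (parab cs J))).ncard :=
      (Set.ncard_image_of_injective _ Subtype.val_injective).symm
    _ ≤ (cs.simple '' K).ncard :=
      Set.ncard_le_ncard (Set.image_preimage_subset _ _) (hK.image _)

theorem parab_simpleImage_eq_map_conj (hK : K.Finite) {w : W}
    (hw : K ⊆ conjInter cs w K (simpleImage cs δ K)) :
    parab cs (simpleImage cs δ K) = (parab cs K).map (MulAut.conj w).toMonoidHom := by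
  rw [parab, parab, MonoidHom.map_closure]
  congr 1
  refine (Set.eq_of_subset_of_ncard_le ?_ ?_ (finite_simple_image_simpleImage hK)).symm
  · rintro _ ⟨_, ⟨k, hk, rfl⟩, rfl⟩
    obtain ⟨-, l, hl, heq⟩ := hw hk
    exact ⟨l, hl, heq.symm⟩
  · exact (ncard_simple_image_simpleImage_le hK).trans_eq
      (Set.ncard_image_of_injective _ (MulAut.conj w).injective).symm

theorem wSpecial_Iset (w : W) : WSpecial cs J J' δ w (Iset cs J J' δ w) := by
  refine ⟨Set.sUnion_subset fun K hK ↦ hK.1, ?_⟩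
  rintro k ⟨K, hK, hk⟩
  obtain ⟨j, hjJ, hjK, heq⟩ := hK.2 k hk
  exact ⟨j, hjJ, ⟨K, hK, hjK⟩, heq⟩

section DoubleCoset

variable {w x : W}

theorem wSpecial_of_subset_conjInter (hK : K.Finite) (hKJ : K ⊆ J)
    (hx : x ∈ parab cs (simpleImage cs δ K)) (hw : IsMinRep cs K w)
    (hxw : IsMinRep cs K (x * w)) (hsub : K ⊆ conjInter cs w K (simpleImage cs δ K)) :
    WSpecial cs J J' δ (x * w) K := by
  rw [parab_simpleImage_eq_map_conj hK hsub] at hx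
  obtain ⟨y, hy, rfl⟩ := hx
  rw [← hw.eq_of_inv_mul_mem hxw (by simpa [mul_assoc] using hy)]
  refine ⟨hKJ, fun k hk ↦ ?_⟩
  obtain ⟨-, l, ⟨j, hjK, hjJ, hl⟩, heq⟩ := hsub hk
  exact ⟨j, hjJ, hjK, heq.trans hl.symm⟩

theorem WSpecial.subset_conjInter {I : Set ι} (hI : WSpecial cs J J' δ (x * w) I)
    (hδ : MapsSimples cs J J' δ) (hIK : I ⊆ K) (hKJ : K ⊆ J)
    (hx : x ∈ parab cs (simpleImage cs δ K)) (hw : IsMinRep cs (simpleImage cs δ K) w⁻¹) :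
    I ⊆ conjInter cs w K (simpleImage cs δ K) := by
  intro k hk
  obtain ⟨j, hjJ, hjI, heq⟩ := hI.2 k hk
  have hδj : (δ (sJ cs J j hjJ) : W) ∈ parab cs (simpleImage cs δ K) :=
    hδ.map_mem_parab_simpleImage hKJ (simple_mem_parab cs (hIK hjI))
  have conj_eq : w * cs.simple k * w⁻¹ = x⁻¹ * (δ (sJ cs J j hjJ) : W) * x := by
    rw [← heq]
    group
  refine ⟨hIK hk, hw.exists_conj_simple_eq_simple ?_⟩
  rw [conj_eq]
  exact mul_mem (mul_mem (inv_mem hx) hδj) hx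

theorem WSpecial.mem_parab_conjInter {I : Set ι} (hI : WSpecial cs J J' δ (x * w) I)
    (hδ : MapsSimples cs J J' δ) (hIK : I ⊆ K) (hKJ : K ⊆ J)
    (hx : x ∈ parab cs (simpleImage cs δ K)) (hwK : IsMinRep cs K w)
    (hw : IsMinRep cs (simpleImage cs δ K) w⁻¹) {v v' : W} (hv : v ∈ parab cs I)
    (hv' : v' ∈ parab cs I) {u : parab cs J} (hu : (u : W) ∈ parab cs K)
    (h : x * w * v' = (δ u : W) * (x * w * v) * (u : W)⁻¹) :
    (u : W) ∈ parab cs (conjInter cs w K (simpleImage cs δ K)) := by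
  have hI_le := parab_mono cs (hI.subset_conjInter hδ hIK hKJ hx hw)
  have hδu := hδ.map_mem_parab_simpleImage hKJ hu
  have conj_eq : w * (v' * u * v⁻¹) * w⁻¹ = x⁻¹ * (δ u : W) * x := by
    calc w * (v' * u * v⁻¹) * w⁻¹
      _ = x⁻¹ * (x * w * v') * u * v⁻¹ * w⁻¹ := by group
      _ = x⁻¹ * (δ u : W) * x := by rw [h]; group
  have hmem : v' * u * v⁻¹ ∈ parab cs (conjInter cs w K (simpleImage cs δ K)) := by
    refine hwK.mem_parab_conjInter hw ?_ ?_
    · exact mul_mem (mul_mem (parab_mono cs hIK hv') hu) (inv_mem (parab_mono cs hIK hv))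
    · rw [conj_eq]
      exact mul_mem (mul_mem (inv_mem hx) hδu) hx
  rwa [Subgroup.mul_mem_cancel_right _ (inv_mem (hI_le hv)),
    Subgroup.mul_mem_cancel_left _ (hI_le hv')] at hmem

end DoubleCoset

variable {w v v' : W}

theorem MapsSimples.mem_parab_Iset (hδ : MapsSimples cs J J' δ) (hJ : J.Finite)
    (hw : IsMinRep cs J w) (hv : v ∈ parab cs (Iset cs J J' δ w))
    (hv' : v' ∈ parab cs (Iset cs J J' δ w)) {u : parab cs J}
    (h : w * v' = (δ u : W) * (w * v) * (u : W)⁻¹) : (u : W) ∈ parab cs (Iset cs J J' δ w) := by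
  have hI := wSpecial_Iset (δ := δ) w
  have hfin : {K | Iset cs J J' δ w ⊆ K ∧ K ⊆ J ∧ (u : W) ∈ parab cs K}.Finite :=
    hJ.finite_subsets.subset fun K hK ↦ hK.2.1
  obtain ⟨K, ⟨hIK, hKJ, huK⟩, hmin⟩ := hfin.exists_minimal ⟨J, hI.1, subset_rfl, u.2⟩
  have hwK := hw.mono hKJ
  obtain ⟨x, hx, w₀, rfl, hw₀, hw₀K⟩ := hwK.exists_eq_mul (simpleImage cs δ K)
  have conjInter_subset : conjInter cs w₀ K (simpleImage cs δ K) ⊆ K := fun k hk ↦ hk.1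
  have subset_conjInter : K ⊆ conjInter cs w₀ K (simpleImage cs δ K) :=
    hmin ⟨hI.subset_conjInter hδ hIK hKJ hx hw₀, conjInter_subset.trans hKJ,
      hI.mem_parab_conjInter hδ hIK hKJ hx hw₀K hw₀ hv hv' huK h⟩ conjInter_subset
  have hK := wSpecial_of_subset_conjInter (hJ.subset hKJ) hKJ hx hw₀K hwK subset_conjInter
  exact parab_mono cs (Set.subset_sUnion_of_mem hK) huK

section Orbit

variable {x y z : W}

theorem mem_orbitOf : y ∈ orbitOf cs J J' δ x ↔
    ∃ u : parab cs J, y = (δ u : W) * x * (u : W)⁻¹ := by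
  simp [orbitOf, orbSet]

theorem mem_orbitOf_self (x : W) : x ∈ orbitOf cs J J' δ x :=
  mem_orbitOf.2 ⟨1, by simp⟩

theorem mem_orbitOf_symm (h : y ∈ orbitOf cs J J' δ x) : x ∈ orbitOf cs J J' δ y := by
  obtain ⟨u, rfl⟩ := mem_orbitOf.1 h
  exact mem_orbitOf.2 ⟨u⁻¹, by simp [mul_assoc]⟩

theorem mem_orbitOf_trans (hxy : y ∈ orbitOf cs J J' δ x) (hyz : z ∈ orbitOf cs J J' δ y) :
    z ∈ orbitOf cs J J' δ x := by
  obtain ⟨u, rfl⟩ := mem_orbitOf.1 hxy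
  obtain ⟨u', rfl⟩ := mem_orbitOf.1 hyz
  exact mem_orbitOf.2 ⟨u' * u, by simp [mul_assoc]⟩

theorem orbitOf_eq_iff : orbitOf cs J J' δ x = orbitOf cs J J' δ y ↔ y ∈ orbitOf cs J J' δ x :=
  ⟨fun h ↦ h ▸ mem_orbitOf_self y, fun h ↦ Set.ext fun _ ↦
    ⟨mem_orbitOf_trans (mem_orbitOf_symm h), mem_orbitOf_trans h⟩⟩

theorem exists_mul_mem_orbitOf (hx : x ∈ orbSet cs J J' δ (coset cs J J' δ w)) :
    ∃ v ∈ parab cs (Iset cs J J' δ w), w * v ∈ orbitOf cs J J' δ x := by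
  obtain ⟨u, _, ⟨v, hv, rfl⟩, hx⟩ := hx
  exact ⟨v, hv, mem_orbitOf_symm (mem_orbitOf.2 ⟨u, hx⟩)⟩

end Orbit

theorem MapsSimples.mul_mem_orbitOf_iff_twConj (hδ : MapsSimples cs J J' δ) (hJ : J.Finite)
    (hw : IsMinRep cs J w) (hv : v ∈ parab cs (Iset cs J J' δ w))
    (hv' : v' ∈ parab cs (Iset cs J J' δ w)) :
    w * v' ∈ orbitOf cs J J' δ (w * v) ↔ TwConj cs J J' δ w v v' := by
  rw [mem_orbitOf]
  constructor
  · rintro ⟨u, hu⟩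
    refine ⟨u, hδ.mem_parab_Iset hJ hw hv hv' hu, u.2, ?_⟩
    rw [← mul_right_inj w, hu]
    group
  · rintro ⟨u, -, huJ, rfl⟩
    exact ⟨⟨u, huJ⟩, by group⟩

theorem stmt2_general (hδ : MapsSimples cs J J' δ) (hJ : J.Finite) (hw : IsMinRep cs J w) :
    (∀ v ∈ parab cs (Iset cs J J' δ w), ∀ v' ∈ parab cs (Iset cs J J' δ w),
      w * v' ∈ orbitOf cs J J' δ (w * v) ↔ TwConj cs J J' δ w v v') ∧
    (∀ x ∈ orbSet cs J J' δ (coset cs J J' δ w),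
      ∃ v ∈ parab cs (Iset cs J J' δ w), w * v ∈ orbitOf cs J J' δ x) ∧
    (∀ v ∈ parab cs (Iset cs J J' δ w), ∀ v' ∈ parab cs (Iset cs J J' δ w),
      orbitOf cs J J' δ (w * v) = orbitOf cs J J' δ (w * v') ↔
        TwConj cs J J' δ w v v') ∧
    (∀ x ∈ orbSet cs J J' δ (coset cs J J' δ w),
      ∃ v ∈ parab cs (Iset cs J J' δ w),
        orbitOf cs J J' δ x = orbitOf cs J J' δ (w * v)) := by
  simp only [orbitOf_eq_iff]
  have mem_orbitOf_iff := fun v hv v' hv' ↦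
    hδ.mul_mem_orbitOf_iff_twConj (v := v) (v' := v') hJ hw hv hv'
  have exists_mem := fun x hx ↦ exists_mul_mem_orbitOf (δ := δ) (w := w) (x := x) hx
  exact ⟨mem_orbitOf_iff, exists_mem, mem_orbitOf_iff, exists_mem⟩

end General

/-- For `w ∈ W^J`: `w v` and `w v'` lie in the same
`W_J`-orbit iff `v, v'` are `Ad(w)⁻¹ ∘ δ`-twisted conjugate in `W_{I(J,w,δ)}`;
every `W_J`-orbit contained in `W_J ·_δ (w W_{I(J,w,δ)})` contains some `w v`;
hence `v ↦ W_J ·_δ {w v}` induces a bijection from the twisted conjugacy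
classes of `W_{I(J,w,δ)}` onto the `W_J`-orbits in `W_J ·_δ (w W_{I(J,w,δ)})`. -/
theorem stmt2 (hδ : MapsSimples cs J J' δ) (w : W) (hw : IsMinRep cs J w) :
    (∀ v ∈ parab cs (Iset cs J J' δ w), ∀ v' ∈ parab cs (Iset cs J J' δ w),
      w * v' ∈ orbitOf cs J J' δ (w * v) ↔ TwConj cs J J' δ w v v') ∧
    (∀ x ∈ orbSet cs J J' δ (coset cs J J' δ w),
      ∃ v ∈ parab cs (Iset cs J J' δ w), w * v ∈ orbitOf cs J J' δ x) ∧
    (∀ v ∈ parab cs (Iset cs J J' δ w), ∀ v' ∈ parab cs (Iset cs J J' δ w),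
      orbitOf cs J J' δ (w * v) = orbitOf cs J J' δ (w * v') ↔
        TwConj cs J J' δ w v v') ∧
    (∀ x ∈ orbSet cs J J' δ (coset cs J J' δ w),
      ∃ v ∈ parab cs (Iset cs J J' δ w),
        orbitOf cs J J' δ x = orbitOf cs J J' δ (w * v)) :=
  stmt2_general hδ (Set.toFinite J) hw

end PartialConjugation
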